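/- arXiv:1312.6023 — 2 statements merged into one kernel-verified Lean document; each statement's English description precedes it below -/
import Mathlib

section
/- Let A be a unital complex Banach algebra and let S = Σ_{i=1}^3 M_{a_i,b_i} be an elementary operator on A of length 3 such that r(Sx) = 0 for every x ∈ A. Then S*(S(x)) ∈ rad(A) for every x ∈ A, and (Sx)⁵ ∈ rad(A) for every x ∈ A, where S* = Σ_{i=1}^3 M_{b_i,a_i}. -/
open scoped ENNReal NNReal

/-- The Jacobson radical of a (possibly noncommutative) ring. -/
noncomputable def jacobsonRadical (A : Type*) [Ring A] : Ideal A :=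
  Ideal.jacobson (⊥ : Ideal A)

section
open Matrix
set_option linter.unusedSimpArgs false


/-- Schur + Gelfand-Mazur -/
theorem SI.schur {A : Type*} [NormedRing A] [NormedAlgebra ℂ A] [CompleteSpace A]
    (I : Ideal A) [hI : I.IsMaximal] (φ : Module.End A (A ⧸ I)) :
    ∃ l : ℂ, ∀ e, φ e = l • e := by
  have : IsSimpleModule A (A ⧸ I) := isSimpleModule_iff_isCoatom.mpr hI.out
  have : Nontrivial (A ⧸ I) := IsSimpleModule.nontrivial A _
  have key : ∀ ψ : Module.End A (A ⧸ I), ∃ C : ℝ, ∀ e, ‖ψ e‖ ≤ C * ‖e‖ := by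
    intro ψ
    obtain ⟨d, hd⟩ := Submodule.Quotient.mk_surjective I (ψ (Submodule.Quotient.mk 1))
    refine ⟨‖d‖, fun e => ?_⟩
    refine le_of_forall_pos_le_add fun ε hε => ?_
    have hpos : 0 < ε / (‖d‖ + 1) := by positivity
    obtain ⟨x, hx, hlt⟩ := Submodule.Quotient.norm_mk_lt (S := I) e hpos
    have h1 : ψ e = Submodule.Quotient.mk (x * d) := by
      rw [← hx, show (Submodule.Quotient.mk x : A ⧸ I) = x • Submodule.Quotient.mk 1 by
        rw [← Submodule.Quotient.mk_smul]; simp, map_smul, ← hd, ← Submodule.Quotient.mk_smul]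
      simp
    rw [h1]
    refine (Submodule.Quotient.norm_mk_le I _).trans ((norm_mul_le _ _).trans ?_)
    have h2 : ‖d‖ * (ε / (‖d‖ + 1)) ≤ ε := by
      rw [← mul_div_assoc, div_le_iff₀ (by positivity)]
      nlinarith [norm_nonneg d]
    nlinarith [norm_nonneg d]
  obtain ⟨C, hC⟩ := key φ
  let Φ : (A ⧸ I) →L[ℂ] (A ⧸ I) := LinearMap.mkContinuous (φ.restrictScalars ℂ) C hC
  obtain ⟨l, hl⟩ := spectrum.nonempty Φ
  refine ⟨l, ?_⟩
  let L : Module.End A (A ⧸ I) :=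
    { toFun := fun e => l • e
      map_add' := by intros; simp
      map_smul' := fun r x => smul_comm l r x }
  rcases LinearMap.bijective_or_eq_zero (L - φ) with h | h
  · exfalso
    rw [spectrum.mem_iff] at hl
    apply hl
    have hu : IsUnit (L - φ) := (Module.End.isUnit_iff _).2 h
    obtain ⟨u, hu⟩ := hu
    obtain ⟨C', hC'⟩ := key (↑u⁻¹ : Module.End A (A ⧸ I))
    let Ψ : (A ⧸ I) →L[ℂ] (A ⧸ I) :=
      LinearMap.mkContinuous ((↑u⁻¹ : Module.End A (A ⧸ I)).restrictScalars ℂ) C' hC'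
    have e1 : ∀ e, (u : Module.End A (A ⧸ I)) e = l • e - φ e := by
      intro e; rw [hu]; rfl
    refine ⟨⟨algebraMap ℂ _ l - Φ, Ψ, ?_, ?_⟩, rfl⟩
    · ext e
      have := congrArg (fun F : Module.End A (A ⧸ I) => F e) u.mul_inv
      simp only [Module.End.mul_apply, e1] at this
      change l • Ψ e - Φ (Ψ e) = e
      exact this
    · ext e
      have := congrArg (fun F : Module.End A (A ⧸ I) => F e) u.inv_mul
      simp only [Module.End.mul_apply, e1] at this
      change Ψ (l • e - Φ e) = e
      exact this
  · intro e
    have := congrArg (fun F : Module.End A (A ⧸ I) => F e) h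
    simp only [LinearMap.sub_apply, LinearMap.zero_apply, sub_eq_zero] at this
    exact this.symm

theorem SI.density {A : Type*} [NormedRing A] [NormedAlgebra ℂ A] [CompleteSpace A]
    (I : Ideal A) [hI : I.IsMaximal] (φ : (A ⧸ I) →ₗ[ℂ] (A ⧸ I)) (s : Finset (A ⧸ I)) :
    ∃ x : A, ∀ e ∈ s, x • e = φ e := by
  have : IsSimpleModule A (A ⧸ I) := isSimpleModule_iff_isCoatom.mpr hI.out
  let F : Module.End (Module.End A (A ⧸ I)) (A ⧸ I) :=
    { toFun := φ
      map_add' := by simp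
      map_smul' := by
        intro ψ e
        obtain ⟨l, hl⟩ := SI.schur I ψ
        simp [hl] }
  obtain ⟨r, hr⟩ := jacobson_density F s
  exact ⟨r, fun e he => (hr e he).symm⟩

theorem SI.eig {A : Type*} [NormedRing A] [NormedAlgebra ℂ A] [CompleteSpace A]
    (I : Ideal A) (x : A) (hx : spectralRadius ℂ x = 0) (l : ℂ) (hl : l ≠ 0) (e : A ⧸ I)
    (h : x • e = l • e) : e = 0 := by
  have h1 : l ∈ resolventSet ℂ x := spectrum.mem_resolventSet_of_spectralRadius_lt (by
    rw [hx]; simpa using hl)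
  rw [spectrum.mem_resolventSet_iff] at h1
  obtain ⟨u, hu⟩ := h1
  have h2 : (u : A) • e = 0 := by
    rw [hu, sub_smul, h, Algebra.algebraMap_eq_smul_one, smul_assoc, one_smul, sub_self]
  have h3 : (↑u⁻¹ : A) • (u : A) • e = 0 := by rw [h2, smul_zero]
  simpa [smul_smul] using h3


theorem SI.pow_card_of_nil {n : Type*} [Fintype n] [DecidableEq n] (B : Matrix n n ℂ)
    (h : IsNilpotent B) : B ^ Fintype.card n = 0 := by
  have h1 := (Matrix.isNilpotent_charpoly_sub_pow_of_isNilpotent h).eq_zero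
  have h2 := Matrix.aeval_self_charpoly B
  rw [sub_eq_zero.1 h1] at h2
  simpa using h2

theorem SI.nil_of_noeig {n : Type*} [Fintype n] [DecidableEq n] (B : Matrix n n ℂ)
    (h : ∀ l : ℂ, l ≠ 0 → ∀ v : n → ℂ, B *ᵥ v = l • v → v = 0) : IsNilpotent B := by
  have h1 : ∀ r ∈ B.charpoly.roots, r = 0 := by
    intro r hr
    by_contra hne
    have hr2 := (Polynomial.mem_roots (Matrix.charpoly_monic B).ne_zero).1 hr
    rw [← Matrix.mem_spectrum_iff_isRoot_charpoly, ← Matrix.spectrum_toLin',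
      ← Module.End.hasEigenvalue_iff_mem_spectrum] at hr2
    obtain ⟨v, hv⟩ := hr2.exists_hasEigenvector
    exact hv.2 (h r hne v (by simpa using hv.apply_eq_smul))
  have h2 := (IsAlgClosed.splits B.charpoly).eq_prod_roots_of_monic (Matrix.charpoly_monic B)
  rw [Multiset.eq_replicate_of_mem h1] at h2
  have h3 := Matrix.aeval_self_charpoly B
  rw [h2] at h3
  exact ⟨_, by simpa using h3⟩

theorem SI.trace_fromBlocks (a b c d : Matrix (Fin 3) (Fin 3) ℂ) :
    (fromBlocks a b c d).trace = a.trace + d.trace := by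
  simp [Matrix.trace, Fintype.sum_sum_type]

theorem SI.tr3 (a b c d : Matrix (Fin 3) (Fin 3) ℂ) :
    ((fromBlocks a b c d) ^ 3).trace = (a * a * a).trace + 3 * (a * b * c).trace +
      3 * (d * c * b).trace + (d * d * d).trace := by
  have c1 := Matrix.trace_mul_comm c (a * b)
  have c2 := Matrix.trace_mul_comm (c * a) b
  have c3 := Matrix.trace_mul_comm (b * d) c
  have c4 := Matrix.trace_mul_comm (d * c) b
  simp only [pow_succ, pow_zero, one_mul, fromBlocks_multiply, SI.trace_fromBlocks,
    trace_add, add_mul, mul_add, ← mul_assoc] at *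
  grind

theorem SI.tr4 (a b c d : Matrix (Fin 3) (Fin 3) ℂ) :
    ((fromBlocks a b c d) ^ 4).trace = (a * a * a * a).trace + 4 * (a * a * b * c).trace +
      (4 * (a * b * d * c).trace + 2 * (b * c * (b * c)).trace) +
      4 * (d * d * c * b).trace + (d * d * d * d).trace := by
  have c1 := Matrix.trace_mul_comm c (a * a * b)
  have c2 := Matrix.trace_mul_comm (c * a) (a * b)
  have c3 := Matrix.trace_mul_comm (c * a * a) b
  have d1 := Matrix.trace_mul_comm c (a * b * d)
  have d2 := Matrix.trace_mul_comm (c * a) (b * d)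
  have d3 := Matrix.trace_mul_comm (c * a * b) d
  have g1 := Matrix.trace_mul_comm c (b * d * d)
  have g2 := Matrix.trace_mul_comm (c * b) (d * d)
  have g3 := Matrix.trace_mul_comm (c * b * d) d
  have w := Matrix.trace_mul_comm c (b * c * b)
  simp only [pow_succ, pow_zero, one_mul, fromBlocks_multiply, SI.trace_fromBlocks,
    trace_add, add_mul, mul_add, ← mul_assoc] at *
  grind

theorem SI.tr2 (a b c d : Matrix (Fin 3) (Fin 3) ℂ) :
    ((fromBlocks a b c d) ^ 2).trace = (a * a).trace + 2 * (b * c).trace + (d * d).trace := by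
  have c1 := Matrix.trace_mul_comm b c
  simp only [pow_succ, pow_zero, one_mul, fromBlocks_multiply, SI.trace_fromBlocks,
    trace_add] at *
  grind

theorem SI.tr3lin (X Y : Matrix (Fin 3) (Fin 3) ℂ)
    (h : ∀ t : ℂ, ((X + t • Y) * (X + t • Y) * (X + t • Y)).trace = 0) :
    (X * X * Y).trace = 0 := by
  have c1 := Matrix.trace_mul_comm X (X * Y)
  have c2 := Matrix.trace_mul_comm (X * X) Y
  have e1 := h 1
  have e2 := h (-1)
  have e3 := h 2
  have e4 := h (-2)
  simp only [trace_add, add_mul, mul_add, trace_smul, smul_mul_assoc, smul_add,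
    mul_smul_comm, smul_eq_mul, ← mul_assoc] at *
  linear_combination (2/9 : ℂ) * e1 - (2/9 : ℂ) * e2 - (1/36 : ℂ) * e3 + (1/36 : ℂ) * e4
    + (1/3 : ℂ) * c1 + (2/3 : ℂ) * c2 - (1/3 : ℂ) * c2

theorem SI.tr3sum (a b c d : Matrix (Fin 3) (Fin 3) ℂ)
    (h : ∀ s t : ℂ, ((a + s • c + t • (b + s • d)) * (a + s • c + t • (b + s • d))
      * (a + s • c + t • (b + s • d))).trace = 0) :
    (a * a * d).trace + (a * b * c).trace + (a * c * b).trace = 0 := by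
  have d2 := Matrix.trace_mul_comm c (a * b)
  have h' := fun s => SI.tr3lin _ _ (h s)
  have e1 := h' 1
  have e2 := h' (-1)
  have e3 := h' 2
  have e4 := h' (-2)
  simp only [trace_add, add_mul, mul_add, trace_smul, smul_mul_assoc, smul_add,
    mul_smul_comm, smul_eq_mul, ← mul_assoc] at *
  linear_combination (2/3 : ℂ) * e1 - (2/3 : ℂ) * e2 - (1/12 : ℂ) * e3 + (1/12 : ℂ) * e4 - d2

structure SI.Hyp {Q P : Type*} [AddCommGroup Q] [Module ℂ Q] [AddCommGroup P] [Module ℂ P]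
    (m : Q →ₗ[ℂ] P →ₗ[ℂ] Matrix (Fin 3) (Fin 3) ℂ) : Prop where
  nil : ∀ f p, m f p ^ 3 = 0
  t1 : ∀ f p, (m f p).trace = 0
  t2 : ∀ f p f' p', (m f p * m f' p').trace = 0
  t3a : ∀ f p f' p', (m f p * m f p' * m f' p).trace = 0
  t3b : ∀ f p f' p', (m f p * m f' p * m f p').trace + (m f p * m f p * m f' p').trace = 0
  t4a : ∀ f p f' p', (m f p * m f p * m f p' * m f' p).trace = 0
  t4b : ∀ f p f' p', 2 * (m f p * m f p' * m f' p' * m f' p).trace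
    + (m f p' * m f' p * (m f p' * m f' p)).trace = 0

theorem SI.Hyp.of_nil {Q P : Type*} [AddCommGroup Q] [Module ℂ Q] [AddCommGroup P] [Module ℂ P]
    (m : Q →ₗ[ℂ] P →ₗ[ℂ] Matrix (Fin 3) (Fin 3) ℂ)
    (h : ∀ f f' p p', IsNilpotent (fromBlocks (m f p) (m f p') (m f' p) (m f' p'))) :
    SI.Hyp m := by
  have nil : ∀ f p, IsNilpotent (m f p) := by
    intro f p
    have h1 := h f 0 p 0
    apply SI.nil_of_noeig
    intro l hl v hv
    obtain ⟨k, hk⟩ := h1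
    have h3 : ∀ k : ℕ, (fromBlocks (m f p) (m f 0) (m 0 p) (m 0 0)) ^ k *ᵥ (Sum.elim v 0)
        = l ^ k • (Sum.elim v 0) := by
      intro k
      induction k with
      | zero => simp
      | succ k ih =>
        rw [pow_succ, ← mulVec_mulVec]
        have : (fromBlocks (m f p) (m f 0) (m 0 p) (m 0 0)) *ᵥ (Sum.elim v 0)
          = l • (Sum.elim v 0 : Fin 3 ⊕ Fin 3 → ℂ) := by
          rw [fromBlocks_mulVec]
          ext i
          rcases i with i | i <;> simp [hv]
        rw [this, mulVec_smul, ih, smul_smul, pow_succ, mul_comm]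
    have h4 := h3 k
    rw [hk] at h4
    ext i
    have h5 := congrFun h4 (Sum.inl i)
    simpa [hl] using h5
  have nil3 : ∀ f p, m f p ^ 3 = 0 := fun f p => by
    simpa using SI.pow_card_of_nil _ (nil f p)
  have tr : ∀ f f' p p' (k : ℕ), k ≠ 0 →
      ((fromBlocks (m f p) (m f p') (m f' p) (m f' p')) ^ k).trace = 0 := by
    intro f f' p p' k hk
    exact (Matrix.isNilpotent_trace_of_isNilpotent ((h f f' p p').pow_of_pos hk)).eq_zero
  have tr1 : ∀ f p, (m f p).trace = 0 := fun f p =>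
    (Matrix.isNilpotent_trace_of_isNilpotent (nil f p)).eq_zero
  have tr2 : ∀ f p, (m f p * m f p).trace = 0 := fun f p => by
    rw [← pow_two]
    exact (Matrix.isNilpotent_trace_of_isNilpotent ((nil f p).pow_of_pos two_ne_zero)).eq_zero
  have tr3 : ∀ f p, (m f p * m f p * m f p).trace = 0 := fun f p => by
    rw [← pow_two, ← pow_succ, nil3]; simp
  have tr4 : ∀ f p, (m f p * m f p * m f p * m f p).trace = 0 := fun f p => by
    rw [← pow_two, ← pow_succ, nil3]; simp
  have t3a : ∀ f p f' p', (m f p * m f p' * m f' p).trace = 0 := by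
    intro f p f' p'
    have e1 := tr f f' p p' 3 (by norm_num)
    have e2 := tr f (-f') p p' 3 (by norm_num)
    rw [SI.tr3] at e1 e2
    simp only [map_neg, LinearMap.neg_apply, neg_mul, mul_neg, neg_neg, trace_neg, tr3] at e1 e2
    linear_combination (1/6 : ℂ) * e1 - (1/6 : ℂ) * e2
  have t4a : ∀ f p f' p', (m f p * m f p * m f p' * m f' p).trace = 0 ∧
     2 * (m f p * m f p' * m f' p' * m f' p).trace
    + (m f p' * m f' p * (m f p' * m f' p)).trace = 0 := by
    intro f p f' p'
    have e : ∀ z : ℂ, 4 * z * (m f p * m f p * m f p' * m f' p).trace +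
      z ^ 2 * (4 * (m f p * m f p' * m f' p' * m f' p).trace
       + 2 * (m f p' * m f' p * (m f p' * m f' p)).trace)
       + 4 * z ^ 3 * (m f' p' * m f' p' * m f' p * m f p').trace = 0 := by
      intro z
      have e1 := tr f (z • f') p p' 4 (by norm_num)
      rw [SI.tr4] at e1
      simp only [map_smul, LinearMap.smul_apply, trace_smul, smul_mul_assoc,
        mul_smul_comm, smul_eq_mul, tr4] at e1
      linear_combination e1
    have e1 := e 1
    have e2 := e (-1)
    have e3 := e 2
    constructor
    · linear_combination (1/4 : ℂ) * e1 - (1/12 : ℂ) * e2 - (1/24:ℂ) * e3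
    · linear_combination (1/4:ℂ) * e1 + (1/4 : ℂ) * e2
  have t2 : ∀ f p f' p', (m f p * m f' p').trace = 0 := by
    intro f p f' p'
    have e1 := tr f f' p' p 2 (by norm_num)
    rw [SI.tr2, tr2, tr2] at e1
    linear_combination (1/2 : ℂ) * e1
  refine ⟨nil3, tr1, t2, t3a, ?_, fun f p f' p' => (t4a f p f' p').1,
    fun f p f' p' => (t4a f p f' p').2⟩
  intro f p f' p'
  have e := SI.tr3sum (m f p) (m f p') (m f' p) (m f' p') (by
    intro s t
    have := tr3 (f + s • f') (p + t • p')
    simpa only [map_add, map_smul, LinearMap.add_apply, LinearMap.smul_apply] using this)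
  rw [t3a] at e
  linear_combination e


abbrev SI.J : Matrix (Fin 3) (Fin 3) ℂ := !![0,1,0;0,0,1;0,0,0]
abbrev SI.K : Matrix (Fin 3) (Fin 3) ℂ := !![0,0,0;1,0,0;0,-1,0]

theorem SI.cj {G G' : Matrix (Fin 3) (Fin 3) ℂ} (h : G' * G = 1) (X Y : Matrix (Fin 3) (Fin 3) ℂ) :
    (G * X * G') * (G * Y * G') = G * (X * Y) * G' := by
  calc _ = G * X * (G' * G) * Y * G' := by noncomm_ring
    _ = _ := by rw [h]; noncomm_ring

theorem SI.cjt {G G' : Matrix (Fin 3) (Fin 3) ℂ} (h : G' * G = 1) (X : Matrix (Fin 3) (Fin 3) ℂ) :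
    (G * X * G').trace = X.trace := by
  rw [Matrix.trace_mul_comm, ← mul_assoc, h, one_mul]

section
variable {Q P : Type*} [AddCommGroup Q] [Module ℂ Q] [AddCommGroup P] [Module ℂ P]

noncomputable def SI.conj (m : Q →ₗ[ℂ] P →ₗ[ℂ] Matrix (Fin 3) (Fin 3) ℂ)
    (G G' : Matrix (Fin 3) (Fin 3) ℂ) : Q →ₗ[ℂ] P →ₗ[ℂ] Matrix (Fin 3) (Fin 3) ℂ :=
  m.compr₂ ((LinearMap.mulRight ℂ G').comp (LinearMap.mulLeft ℂ G))

theorem SI.conj_apply (m : Q →ₗ[ℂ] P →ₗ[ℂ] Matrix (Fin 3) (Fin 3) ℂ)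
    (G G' : Matrix (Fin 3) (Fin 3) ℂ) (f p) : SI.conj m G G' f p = G * m f p * G' := by
  simp [SI.conj]

theorem SI.Hyp.conj {m : Q →ₗ[ℂ] P →ₗ[ℂ] Matrix (Fin 3) (Fin 3) ℂ} (h : SI.Hyp m)
    {G G' : Matrix (Fin 3) (Fin 3) ℂ} (hG : G' * G = 1) : SI.Hyp (SI.conj m G G') := by
  refine ⟨?_, ?_, ?_, ?_, ?_, ?_, ?_⟩
  · intro f p
    have := h.nil f p
    rw [SI.conj_apply, pow_succ, pow_two, SI.cj hG, SI.cj hG, ← pow_two, ← pow_succ, this]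
    simp
  all_goals intros; simp only [SI.conj_apply, SI.cj hG, SI.cjt hG]
  · apply h.t1
  · apply h.t2
  · apply h.t3a
  · apply h.t3b
  · apply h.t4a
  · apply h.t4b

noncomputable def SI.tp (m : Q →ₗ[ℂ] P →ₗ[ℂ] Matrix (Fin 3) (Fin 3) ℂ) :
    P →ₗ[ℂ] Q →ₗ[ℂ] Matrix (Fin 3) (Fin 3) ℂ :=
  m.flip.compr₂ (Matrix.transposeLinearEquiv (Fin 3) (Fin 3) ℂ ℂ).toLinearMap

theorem SI.tp_apply (m : Q →ₗ[ℂ] P →ₗ[ℂ] Matrix (Fin 3) (Fin 3) ℂ) (f p) :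
    SI.tp m p f = (m f p)ᵀ := by
  simp [SI.tp]

theorem SI.Hyp.tp {m : Q →ₗ[ℂ] P →ₗ[ℂ] Matrix (Fin 3) (Fin 3) ℂ} (h : SI.Hyp m) :
    SI.Hyp (SI.tp m) := by
  refine ⟨?_, ?_, ?_, ?_, ?_, ?_, ?_⟩
  · intro p f
    rw [SI.tp_apply, ← transpose_pow, h.nil]; simp
  all_goals intros; simp only [SI.tp_apply, ← transpose_mul, trace_transpose]
  · apply h.t1
  · apply h.t2
  · rename_i p f p' f'
    have := h.t3a f p f' p'
    rw [Matrix.trace_mul_comm, ← mul_assoc, Matrix.trace_mul_comm] at this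
    exact this
  · rename_i p f p' f'
    have := h.t3b f p f' p'
    rw [← this]
    congr 1
    · rw [Matrix.trace_mul_comm, mul_assoc, Matrix.trace_mul_comm]
    · rw [Matrix.trace_mul_comm]
  · rename_i p f p' f'
    have := h.t4a f p f' p'
    rw [← this]
    rw [← mul_assoc, Matrix.trace_mul_comm]
    simp only [mul_assoc]
  · rename_i p f p' f'
    have := h.t4b f p f' p'
    rw [← this]
    congr 2
    rw [← mul_assoc, ← mul_assoc, Matrix.trace_mul_comm]
    simp only [mul_assoc]

end

def SI.U (M : Matrix (Fin 3) (Fin 3) ℂ) : Prop := ∀ i j, j ≤ i → M i j = 0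

theorem SI.U_of_nil (M : Matrix (Fin 3) (Fin 3) ℂ) (h : M ^ 3 = 0) (h1 : M 1 0 = 0) (h2 : M 2 0 = 0)
    (h3 : M 2 1 = 0) : SI.U M := by
  have e0 := congrFun (congrFun h 0) 0
  have e1 := congrFun (congrFun h 1) 1
  have e2 := congrFun (congrFun h 2) 2
  simp [pow_succ, Matrix.mul_apply, Fin.sum_univ_three, h1, h2, h3] at e0 e1 e2
  intro i j hij
  fin_cases i <;> fin_cases j <;> simp_all

theorem SI.basis_of (M N : Matrix (Fin 3) (Fin 3) ℂ) (c : Fin 3 → Fin 3 → ℂ)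
    (hli : ∀ x : Fin 3 → ℂ, x 0 • c 0 + x 1 • c 1 + x 2 • c 2 = 0 → x = 0)
    (hM : ∀ j, M *ᵥ c j = ∑ i, N i j • c i) :
    ∃ G G' : Matrix (Fin 3) (Fin 3) ℂ, G * G' = 1 ∧ G' * G = 1 ∧ G * M * G' = N ∧
      ∀ i j, G' i j = c j i := by
  have hu : IsUnit (Matrix.of fun i j => c j i : Matrix (Fin 3) (Fin 3) ℂ) := by
    rw [← Matrix.mulVec_injective_iff_isUnit]
    intro x y hxy
    have : x - y = 0 := by
      apply hli
      have h0 : (Matrix.of fun i j => c j i : Matrix (Fin 3) (Fin 3) ℂ) *ᵥ (x - y) = 0 := by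
        rw [Matrix.mulVec_sub, hxy, sub_self]
      rw [← h0]
      ext i
      simp [Matrix.mulVec, dotProduct, Fin.sum_univ_three]
      ring
    exact sub_eq_zero.1 this
  obtain ⟨u, hu⟩ := hu
  refine ⟨(u⁻¹ : (Matrix (Fin 3) (Fin 3) ℂ)ˣ), u, by simp, by simp, ?_, fun i j => by rw [hu]; rfl⟩
  have : M * u = u * N := by
    rw [hu]
    ext i j
    have := congrFun (hM j) i
    simp [Matrix.mulVec, dotProduct, Fin.sum_univ_three] at this
    simp [Matrix.mul_apply, Fin.sum_univ_three]
    rw [this]; ring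
  rw [mul_assoc, this, ← mul_assoc]; simp

theorem SI.basisJ (M : Matrix (Fin 3) (Fin 3) ℂ) (h : M ^ 3 = 0) (v : Fin 3 → ℂ)
    (hv : (M * M) *ᵥ v ≠ 0) :
    ∃ G G' : Matrix (Fin 3) (Fin 3) ℂ, G * G' = 1 ∧ G' * G = 1 ∧ G * M * G' = SI.J ∧
      ∀ i, G' i 2 = v i := by
  have h3 : M *ᵥ ((M * M) *ᵥ v) = 0 := by
    rw [mulVec_mulVec, ← mul_assoc, ← pow_two, ← pow_succ, h]; simp
  obtain ⟨G, G', h1, h2, h4, h5⟩ := SI.basis_of M SI.J ![(M * M) *ᵥ v, M *ᵥ v, v] (by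
    intro x hx
    simp only [cons_val_zero, cons_val_one, cons_val] at hx
    have e1 := congrArg (M *ᵥ ·) hx
    simp only [mulVec_add, mulVec_smul, h3, mulVec_zero, smul_zero, zero_add] at e1
    have e2 := congrArg (M *ᵥ ·) e1
    simp only [mulVec_add, mulVec_smul, mulVec_zero] at e2
    rw [mulVec_mulVec v M M, h3, smul_zero, zero_add] at e2
    have x2 : x 2 = 0 := (smul_eq_zero.1 e2).resolve_right hv
    rw [mulVec_mulVec v M M, x2, zero_smul, add_zero] at e1
    have x1 : x 1 = 0 := (smul_eq_zero.1 e1).resolve_right hv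
    rw [x1, x2, zero_smul, zero_smul, add_zero, add_zero] at hx
    have x0 : x 0 = 0 := (smul_eq_zero.1 hx).resolve_right hv
    ext i; fin_cases i <;> simp [x0, x1, x2]) (by
    intro j
    fin_cases j
    · simp [Fin.sum_univ_three, SI.J]
      simpa using h3
    · simp [Fin.sum_univ_three, SI.J]
    · simp [Fin.sum_univ_three, SI.J])
  exact ⟨G, G', h1, h2, h4, fun i => by rw [h5]; rfl⟩

theorem SI.basisE (M : Matrix (Fin 3) (Fin 3) ℂ) (h : M * M = 0) (hM : M ≠ 0) :
    ∃ G G' : Matrix (Fin 3) (Fin 3) ℂ, G * G' = 1 ∧ G' * G = 1 ∧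
      G * M * G' = !![0,0,1;0,0,0;0,0,0] := by
  obtain ⟨v, hv⟩ : ∃ v, M *ᵥ v ≠ 0 := by
    by_contra! hc
    apply hM
    apply Matrix.mulVec_injective
    ext1 v
    simpa using hc v
  have h2 : ∀ v, M *ᵥ (M *ᵥ v) = 0 := fun v => by rw [mulVec_mulVec, h]; simp
  obtain ⟨w, hw, hw2⟩ : ∃ w, M *ᵥ w = 0 ∧ ∀ t : ℂ, w ≠ t • M *ᵥ v := by
    by_contra! hc
    choose φ hφ using fun x => hc (M *ᵥ x) (h2 x)
    have : ∀ x, ∃ t : ℂ, x - φ x • v = t • M *ᵥ v := fun x => hc _ (by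
      rw [mulVec_sub, mulVec_smul, hφ x, sub_self])
    have hs : Function.Surjective ((LinearMap.toSpanSingleton ℂ (Fin 3 → ℂ) (M *ᵥ v)).coprod
        (LinearMap.toSpanSingleton ℂ (Fin 3 → ℂ) v)) := by
      intro x
      obtain ⟨t, ht⟩ := this x
      refine ⟨(t, φ x), ?_⟩
      simp [← ht]
    have := LinearMap.finrank_le_finrank_of_surjective hs
    simp at this
  obtain ⟨G, G', h1, h2, h4, h5⟩ := SI.basis_of M !![0,0,1;0,0,0;0,0,0] ![M *ᵥ v, w, v] (by
    intro x hx
    simp only [cons_val_zero, cons_val_one, cons_val] at hx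
    have e1 := congrArg (M *ᵥ ·) hx
    simp only [mulVec_add, mulVec_smul, h2, hw, mulVec_zero, smul_zero, zero_add] at e1
    have x2 : x 2 = 0 := (smul_eq_zero.1 e1).resolve_right hv
    rw [x2, zero_smul, add_zero] at hx
    have x1 : x 1 = 0 := by
      by_contra hne
      apply hw2 (- (x 1)⁻¹ * x 0)
      have : x 0 • M *ᵥ v = - (x 1 • w) := eq_neg_of_add_eq_zero_left hx
      rw [mul_smul, this, smul_neg, neg_smul, neg_neg, smul_smul, inv_mul_cancel₀ hne, one_smul]
    rw [x1, zero_smul, add_zero] at hx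
    have x0 : x 0 = 0 := (smul_eq_zero.1 hx).resolve_right hv
    ext i; fin_cases i <;> simp [x0, x1, x2]) (by
    intro j
    fin_cases j
    · simpa [Fin.sum_univ_three] using h2 v
    · simpa [Fin.sum_univ_three] using hw
    · simp [Fin.sum_univ_three])
  exact ⟨G, G', h1, h2, h4⟩


section
variable {Q P : Type*} [AddCommGroup Q] [Module ℂ Q] [AddCommGroup P] [Module ℂ P]

theorem SI.case0 {m : Q →ₗ[ℂ] P →ₗ[ℂ] Matrix (Fin 3) (Fin 3) ℂ} (h : SI.Hyp m)
    (hsq : ∀ f p, m f p * m f p = 0) (f0 : Q) (p0 : P) (h0 : m f0 p0 = !![0,0,1;0,0,0;0,0,0])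
    (f : Q) (p : P) : SI.U (m f p) := by
  have e1 : m f0 p0 * m f p0 + m f p0 * m f0 p0 = 0 := by
    have := hsq (f0 + f) p0
    simp only [map_add, LinearMap.add_apply, mul_add, add_mul, hsq, zero_add, add_zero] at this
    rw [add_comm]; exact this
  have e2 : m f0 p0 * m f0 p + m f0 p * m f0 p0 = 0 := by
    have := hsq f0 (p0 + p)
    simp only [map_add, LinearMap.add_apply, mul_add, add_mul, hsq, zero_add, add_zero] at this
    rw [add_comm]; exact this
  have key : ∀ M : Matrix (Fin 3) (Fin 3) ℂ, M ^ 3 = 0 → m f0 p0 * M + M * m f0 p0 = 0 → SI.U M := by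
    intro M hM he
    rw [h0] at he
    have a1 := congrFun (congrFun he 0) 0
    have a2 := congrFun (congrFun he 0) 1
    have a3 := congrFun (congrFun he 1) 2
    simp [Matrix.mul_apply, Fin.sum_univ_three, Matrix.vecMul, dotProduct] at a1 a2 a3
    exact SI.U_of_nil M hM a3 a1 a2
  have u1 := key _ (h.nil _ _) e1
  have u2 := key _ (h.nil _ _) e2
  have e1' : m f p * m f0 p + m f0 p * m f p = 0 := by
    have := hsq (f0 + f) p
    simp only [map_add, LinearMap.add_apply, mul_add, add_mul, hsq, zero_add, add_zero] at this
    exact this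
  have e2' : m f p * m f p0 + m f p0 * m f p = 0 := by
    have := hsq f (p0 + p)
    simp only [map_add, LinearMap.add_apply, mul_add, add_mul, hsq, zero_add, add_zero] at this
    exact this
  have e3 : m f0 p0 * m f p + m f p * m f0 p0 + (m f p0 * m f0 p + m f0 p * m f p0) = 0 := by
    have := hsq (f0 + f) (p0 + p)
    simp only [map_add, LinearMap.add_apply, mul_add, add_mul, hsq, zero_add, add_zero] at this
    linear_combination (norm := abel) this - e1 - e2 - e1' - e2'
  rw [h0] at e3
  have a1 := congrFun (congrFun e3 0) 0
  have a2 := congrFun (congrFun e3 0) 1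
  have a3 := congrFun (congrFun e3 1) 2
  have u : ∀ M N : Matrix (Fin 3) (Fin 3) ℂ, SI.U M → SI.U N → (M * N) 0 0 = 0 ∧ (M * N) 0 1 = 0
      ∧ (M * N) 1 2 = 0 := by
    intro M N hM hN
    simp [Matrix.mul_apply, Fin.sum_univ_three, hM 0 0, hM 1 0, hM 1 1, hN 0 0, hN 1 0, hN 1 1,
      hN 2 0, hN 2 1, hN 2 2]
  simp only [Matrix.add_apply, u _ _ u1 u2, u _ _ u2 u1] at a1 a2 a3
  simp [Matrix.mul_apply, Fin.sum_univ_three, Matrix.vecMul, dotProduct] at a1 a2 a3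
  exact SI.U_of_nil _ (h.nil _ _) a3 a1 a2

theorem SI.trJJ (M : Matrix (Fin 3) (Fin 3) ℂ) : (SI.J * SI.J * M).trace = M 2 0 := by
  simp [Matrix.trace, Matrix.mul_apply, Fin.sum_univ_three, SI.J, Matrix.vecMul, dotProduct]

theorem SI.trJ (M : Matrix (Fin 3) (Fin 3) ℂ) : (SI.J * M).trace = M 1 0 + M 2 1 := by
  simp [Matrix.trace, Matrix.mul_apply, Fin.sum_univ_three, SI.J, Matrix.vecMul, dotProduct]

/-- tr(J^2 beta) = 0 -/
theorem SI.Hyp.sq {m : Q →ₗ[ℂ] P →ₗ[ℂ] Matrix (Fin 3) (Fin 3) ℂ} (h : SI.Hyp m) (f p f') :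
    (m f p * m f p * m f' p).trace = 0 := by
  have := h.t3b f p f' p
  rw [mul_assoc, Matrix.trace_mul_comm, Matrix.trace_mul_comm, ← mul_assoc] at this
  have h2 := Matrix.trace_mul_comm (m f p) (m f' p * m f p)
  have h3 := Matrix.trace_mul_comm (m f' p) (m f p * m f p)
  simp only [mul_assoc] at *
  grind

theorem SI.Hyp.sq' {m : Q →ₗ[ℂ] P →ₗ[ℂ] Matrix (Fin 3) (Fin 3) ℂ} (h : SI.Hyp m) (f p p') :
    (m f p * m f p * m f p').trace = 0 := by
  have := h.t3b f p f p'
  linear_combination (1/2:ℂ) * this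

theorem SI.caseA {m : Q →ₗ[ℂ] P →ₗ[ℂ] Matrix (Fin 3) (Fin 3) ℂ} (h : SI.Hyp m)
    (f0 : Q) (p0 : P) (h0 : m f0 p0 = SI.J)
    (hA : ∀ f, (m f0 p0 * m f0 p0 * (m f p0 * m f p0)).trace = 0)
    (hB : ∀ p, (m f0 p0 * m f0 p0 * (m f0 p * m f0 p)).trace = 0)
    (f : Q) (p : P) : SI.U (m f p) := by
  have key : ∀ M : Matrix (Fin 3) (Fin 3) ℂ, M ^ 3 = 0 → (SI.J * M).trace = 0 →
      (SI.J * SI.J * M).trace = 0 → (SI.J * SI.J * (M * M)).trace = 0 → SI.U M := by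
    intro M hM h1 h2 h3
    rw [SI.trJJ] at h2 h3
    rw [SI.trJ] at h1
    simp [Matrix.mul_apply, Fin.sum_univ_three, h2] at h3
    rcases h3 with h3 | h3
    · exact SI.U_of_nil _ hM (by simpa [h3] using h1) h2 h3
    · exact SI.U_of_nil _ hM h3 h2 (by simpa [h3] using h1)
  have u1 : SI.U (m f p0) := key _ (h.nil _ _) (by rw [← h0]; apply h.t2) (by
    rw [← h0]; exact h.sq _ _ _) (by rw [← h0]; apply hA)
  have u2 : SI.U (m f0 p) := key _ (h.nil _ _) (by rw [← h0]; apply h.t2) (by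
    rw [← h0]; exact h.sq' _ _ _) (by rw [← h0]; apply hB)
  have s1 := h.t2 f0 p0 f p
  rw [h0, SI.trJ] at s1
  have s2 := h.t3b f0 p0 f p
  rw [h0, SI.trJJ] at s2
  have s3 := h.t4b f0 p f p0
  rw [h0] at s3
  have hz : m f p 2 0 = 0 := by
    simpa [Matrix.trace, Matrix.mul_apply, Fin.sum_univ_three, SI.J, Matrix.vecMul, dotProduct, u1 _ _ (le_refl _),
      u1 1 0, u1 2 0, u1 2 1, u2 1 0, u2 2 0, u2 2 1, u2 _ _ (le_refl _)] using s2
  have hz2 : m f p 1 0 = 0 := by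
    simp [Matrix.trace, Matrix.mul_apply, Fin.sum_univ_three, SI.J, Matrix.vecMul, dotProduct, u1 _ _ (le_refl _),
      u1 1 0, u1 2 0, u1 2 1, u2 1 0, u2 2 0, u2 2 1, u2 _ _ (le_refl _), hz] at s3
    grind
  exact SI.U_of_nil _ (h.nil _ _) hz2 hz (by simpa [hz2] using s1)
end


section
variable {Q P : Type*} [AddCommGroup Q] [Module ℂ Q] [AddCommGroup P] [Module ℂ P]

theorem SI.B0 {m : Q →ₗ[ℂ] P →ₗ[ℂ] Matrix (Fin 3) (Fin 3) ℂ} (h : SI.Hyp m)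
    (f0 f1 : Q) (p0 : P) (h0 : m f0 p0 = SI.J)
    (hA : (m f0 p0 * m f0 p0 * (m f1 p0 * m f1 p0)).trace ≠ 0) :
    ∃ v, m f1 p0 *ᵥ v = 0 ∧ (m f0 p0 * m f0 p0) *ᵥ v ≠ 0 := by
  have s1 := h.sq f0 p0 f1
  have hd : (m f1 p0).det = 0 := by
    have := congrArg Matrix.det (h.nil f1 p0)
    simpa [Matrix.det_pow] using this
  obtain ⟨v, hv, hv2⟩ := Matrix.exists_mulVec_eq_zero_iff.2 hd
  refine ⟨v, hv2, fun hc => hv ?_⟩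
  rw [h0] at hc s1 hA
  rw [SI.trJJ] at s1 hA
  simp [Matrix.mul_apply, Fin.sum_univ_three, s1] at hA
  have k0 := congrFun hc 0
  have k1 := congrFun hv2 1
  have k2 := congrFun hv2 2
  simp [Matrix.mulVec, dotProduct, Fin.sum_univ_three, Matrix.mul_apply, SI.J, Matrix.vecMul, dotProduct] at k0
  simp [Matrix.mulVec, dotProduct, Fin.sum_univ_three, s1, k0, hA] at k2
  simp [Matrix.mulVec, dotProduct, Fin.sum_univ_three, k2, k0, hA] at k1
  ext i; fin_cases i <;> simp [k0, k1, k2]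

theorem SI.B1 {m : Q →ₗ[ℂ] P →ₗ[ℂ] Matrix (Fin 3) (Fin 3) ℂ} (h : SI.Hyp m)
    (f0 f1 : Q) (p0 : P) (h0 : m f0 p0 = SI.J)
    (hA : (m f0 p0 * m f0 p0 * (m f1 p0 * m f1 p0)).trace ≠ 0)
    (hv : ∀ i, m f1 p0 i 2 = 0) :
    ∃ s : ℂ, s ≠ 0 ∧ m f1 p0 = s • SI.K := by
  have s1 := h.sq f0 p0 f1
  have s2 := h.sq f1 p0 f0
  have s3 := h.t2 f0 p0 f1 p0
  have s4 := h.t2 f1 p0 f1 p0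
  have s5 := h.t1 f1 p0
  rw [h0] at s1 s2 s3 hA
  rw [SI.trJJ] at s1 hA
  rw [SI.trJ] at s3
  generalize m f1 p0 = M at *
  simp [Matrix.mul_apply, Fin.sum_univ_three, s1] at hA
  simp [Matrix.trace, Matrix.mul_apply, Fin.sum_univ_three, s1, SI.J, Matrix.vecMul, dotProduct, hv] at s2 s4 s5
  have a0 : M 0 0 = 0 := by grind
  have a1 : M 1 1 = 0 := by grind
  have a2 : M 0 1 = 0 := by grind
  refine ⟨M 1 0, hA.2, ?_⟩
  ext i j
  fin_cases i <;> fin_cases j <;> simp [SI.K, a0, a1, a2, hv, s1]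
  grind

theorem SI.B2 {m : Q →ₗ[ℂ] P →ₗ[ℂ] Matrix (Fin 3) (Fin 3) ℂ} (h : SI.Hyp m)
    (f0 f1 : Q) (p0 : P) (h0 : m f0 p0 = SI.J) (h1 : m f1 p0 = SI.K) (p : P) :
    ∃ g : ℂ, m f0 p = g • SI.J ∧ m f1 p = g • SI.K := by
  have a1 := h.t1 f0 p
  have a2 := h.t2 f0 p0 f0 p
  have a3 := h.t2 f1 p0 f0 p
  have a4 := h.t2 f0 p f0 p
  have b1 := h.t1 f1 p
  have b2 := h.t2 f0 p0 f1 p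
  have b3 := h.t2 f1 p0 f1 p
  have b4 := h.t2 f1 p f1 p
  have c1 := h.t3a f0 p0 f1 p
  have c2 := h.t3b f0 p0 f1 p
  have c3 := h.t3a f1 p0 f0 p
  have c4 := h.t3b f1 p0 f0 p
  have c5 := h.sq' f0 p0 p
  have c6 := h.sq' f1 p0 p
  have d1 := h.t4a f0 p0 f1 p
  have d2 := h.t4a f1 p0 f0 p
  have d3 := h.t4b f0 p f1 p0
  have d4 := h.t4b f0 p0 f1 p
  rw [h0, h1] at *
  generalize m f0 p = α at *
  generalize m f1 p = β at *
  simp [Matrix.trace, Matrix.mul_apply, Fin.sum_univ_three, SI.J, SI.K, Matrix.vecMul, dotProduct] at *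
  have x10 : α 1 0 = 0 := by linear_combination a2 - d1
  have x11 : α 1 1 = 0 := by
    rw [d1, x10, c5] at a4
    have : α 1 1 ^ 2 = 0 := by
      linear_combination (1/6 : ℂ) * a4 - (1/6:ℂ) * (α 0 0 - α 1 1 - α 2 2) * a1 - (1/6:ℂ) * (-4 * α 1 1 - 2 * α 2 2) * c1
    exact pow_eq_zero_iff two_ne_zero |>.1 this
  have x22 : α 2 2 = 0 := by linear_combination x11 - c1
  have x00 : α 0 0 = 0 := by linear_combination a1 - x11 - x22
  have y01 : β 1 2 = 0 := by linear_combination d2 - b3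
  have y11 : β 1 1 = 0 := by
    rw [d2, y01, c6] at b4
    have : β 1 1 ^ 2 = 0 := by
      linear_combination (1/6 : ℂ) * b4 - (1/6:ℂ) * (β 2 2 - β 1 1 - β 0 0) * b1 - (1/6:ℂ) * (4 * β 1 1 + 2 * β 0 0) * c3
    exact pow_eq_zero_iff two_ne_zero |>.1 this
  have y00 : β 0 0 = 0 := by linear_combination y11 + c3
  have y22 : β 2 2 = 0 := by linear_combination b1 - y11 - y00
  have x02 : α 0 2 = 0 := by linear_combination y11 - y22 - c4
  have y20 : β 2 0 = 0 := by linear_combination c2 - x00 + x11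
  have x12 : α 1 2 = α 0 1 := by linear_combination -a3
  have y21 : β 2 1 = - β 1 0 := by linear_combination b2
  simp only [x10, x11, x22, x00, y01, y11, y00, y22, x02, y20, x12, y21, c5, c6, d1, d2] at d3 d4
  have hg : α 0 1 - β 1 0 = 0 := by
    have : (α 0 1 - β 1 0) ^ 2 = 0 := by linear_combination (1/2:ℂ) * d3 + (1/2:ℂ) * d4
    exact pow_eq_zero_iff two_ne_zero |>.1 this
  refine ⟨α 0 1, ?_, ?_⟩
  · ext i j
    fin_cases i <;> fin_cases j <;> simp [*]
  · have : β 1 0 = α 0 1 := by linear_combination -hg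
    ext i j
    fin_cases i <;> fin_cases j <;> simp [*]

theorem SI.B3 {m : Q →ₗ[ℂ] P →ₗ[ℂ] Matrix (Fin 3) (Fin 3) ℂ} (h : SI.Hyp m)
    (f0 f1 : Q) (p0 : P) (h0 : m f0 p0 = SI.J) (h1 : m f1 p0 = SI.K) (f : Q) :
    ∃ e s : ℂ, m f p0 = e • SI.J + s • SI.K := by
  have a1 := h.t1 f p0
  have a2 := h.t2 f0 p0 f p0
  have a3 := h.t2 f1 p0 f p0
  have a4 := h.t2 f p0 f p0
  have c5 := h.sq f0 p0 f
  have c6 := h.sq f1 p0 f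
  have c7 := h.sq (f0 + f1) p0 f
  rw [map_add, LinearMap.add_apply] at c7
  rw [h0, h1] at *
  generalize m f p0 = α at *
  simp [Matrix.trace, Matrix.mul_apply, Fin.sum_univ_three, SI.J, SI.K, Matrix.vecMul, dotProduct] at *
  have x12 : α 1 2 = α 0 1 := by linear_combination -a3
  have y21 : α 2 1 = - α 1 0 := by linear_combination a2
  refine ⟨α 0 1, α 1 0, ?_⟩
  have z : α 2 2 = α 0 0 := by linear_combination c5 - c6 - c7
  have z1 : α 1 1 = -2 * α 0 0 := by linear_combination a1 - z
  rw [c5, c6, x12, y21, z, z1] at a4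
  have z0 : α 0 0 = 0 := by
    have : α 0 0 ^ 2 = 0 := by linear_combination (1/6 : ℂ) * a4
    exact pow_eq_zero_iff two_ne_zero |>.1 this
  rw [z0] at z z1
  rw [mul_zero] at z1
  ext i j
  fin_cases i <;> fin_cases j <;> simp [z0, z, z1, x12, y21, c5, c6]

theorem SI.B4 {m : Q →ₗ[ℂ] P →ₗ[ℂ] Matrix (Fin 3) (Fin 3) ℂ} (h : SI.Hyp m)
    (f0 f1 : Q) (p0 : P) (h0 : m f0 p0 = SI.J) (h1 : m f1 p0 = SI.K) (p : P) :
    ∃ g : ℂ, ∀ f, m f p = g • m f p0 := by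
  obtain ⟨g, hg0, hg1⟩ := SI.B2 h f0 f1 p0 h0 h1 p
  refine ⟨g, fun f => ?_⟩
  obtain ⟨e, s, hes⟩ := SI.B3 h f0 f1 p0 h0 h1 f
  obtain ⟨g', h2, h3⟩ := SI.B2 h (f0 + (f - e • f0 - s • f1)) f1 p0 (by
    simp only [map_add, map_sub, map_smul, LinearMap.add_apply, LinearMap.sub_apply,
      LinearMap.smul_apply, h0, h1, hes]; abel) h1 p
  have hgg : g' = g := by
    rw [hg1] at h3
    have := congrFun (congrFun h3 1) 0
    simpa [SI.K] using this.symm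
  rw [hgg] at h2
  simp only [map_add, map_sub, map_smul, LinearMap.add_apply, LinearMap.sub_apply,
      LinearMap.smul_apply, hg0, hg1] at h2
  have h4 : m f p = e • g • SI.J + s • g • SI.K := by
    linear_combination (norm := abel) h2
  rw [h4, hes, smul_add]
  congr 1 <;> exact smul_comm _ _ _

theorem SI.B {m : Q →ₗ[ℂ] P →ₗ[ℂ] Matrix (Fin 3) (Fin 3) ℂ} (h : SI.Hyp m)
    (f0 f1 : Q) (p0 : P)
    (hA : (m f0 p0 * m f0 p0 * (m f1 p0 * m f1 p0)).trace ≠ 0) :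
    ∀ p, ∃ g : ℂ, ∀ f, m f p = g • m f p0 := by
  obtain ⟨v, hv1, hv2⟩ : ∃ v, m f1 p0 *ᵥ v = 0 ∧ (m f0 p0 * m f0 p0) *ᵥ v ≠ 0 := by
    obtain ⟨w, hw⟩ : ∃ w, (m f0 p0 * m f0 p0) *ᵥ w ≠ 0 := by
      by_contra! hc
      apply hA
      have : m f0 p0 * m f0 p0 = 0 := by
        apply Matrix.mulVec_injective
        ext1 v
        simpa using hc v
      rw [this]; simp
    obtain ⟨G, G', h1, h2, h3, -⟩ := SI.basisJ _ (h.nil f0 p0) w hw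
    obtain ⟨v, hv1, hv2⟩ := SI.B0 (h.conj h2) f0 f1 p0 (by rw [SI.conj_apply, h3]) (by
      simp only [SI.conj_apply, SI.cj h2, SI.cjt h2]; exact hA)
    simp only [SI.conj_apply, SI.cj h2] at hv1 hv2
    refine ⟨G' *ᵥ v, ?_, ?_⟩
    · have := congrArg (G' *ᵥ ·) hv1
      simp only [mulVec_mulVec, ← mul_assoc, h2, one_mul, mulVec_zero] at this
      rw [mulVec_mulVec, this]
    · intro hc
      apply hv2
      rw [mulVec_mulVec] at hc
      rw [mul_assoc, ← mulVec_mulVec, hc, mulVec_zero]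
  obtain ⟨G, G', h1, h2, h3, h4⟩ := SI.basisJ _ (h.nil f0 p0) v hv2
  have hm := h.conj h2
  obtain ⟨s, hs, hs2⟩ := SI.B1 hm f0 f1 p0 (by rw [SI.conj_apply, h3]) (by
      simp only [SI.conj_apply, SI.cj h2, SI.cjt h2]; exact hA) (by
    intro i
    rw [SI.conj_apply, mul_assoc]
    have : ∀ j, (m f1 p0 * G') j 2 = 0 := by
      intro j
      have := congrFun hv1 j
      simpa [Matrix.mul_apply, h4, Matrix.mulVec, dotProduct] using this
    rw [Matrix.mul_apply]
    simp [this])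
  intro p
  obtain ⟨g, hg⟩ := SI.B4 hm f0 (s⁻¹ • f1) p0 (by rw [SI.conj_apply, h3]) (by
    rw [map_smul, LinearMap.smul_apply, hs2, smul_smul, inv_mul_cancel₀ hs, one_smul]) p
  refine ⟨g, fun f => ?_⟩
  have := congrArg (fun X => G' * X * G) (hg f)
  simp only [SI.conj_apply, mul_smul_comm, smul_mul_assoc, ← mul_assoc, h2, one_mul] at this
  simpa only [mul_assoc, h2, mul_one] using this

theorem SI.main {m : Q →ₗ[ℂ] P →ₗ[ℂ] Matrix (Fin 3) (Fin 3) ℂ} (h : SI.Hyp m) :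
    (∃ G G' : Matrix (Fin 3) (Fin 3) ℂ, G' * G = 1 ∧ ∀ f p, SI.U (G * m f p * G')) ∨
    (∃ f0 p0, m f0 p0 ≠ 0 ∧ ∀ p, ∃ g : ℂ, ∀ f, m f p = g • m f p0) ∨
    (∃ f0 p0, m f0 p0 ≠ 0 ∧ ∀ f, ∃ g : ℂ, ∀ p, m f p = g • m f0 p) := by
  by_cases hsq : ∀ f p, m f p * m f p = 0
  · left
    by_cases hz : ∀ f p, m f p = 0
    · exact ⟨1, 1, by simp, fun f p => by rw [hz]; intro i j _; simp⟩
    push Not at hz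
    obtain ⟨f0, p0, hz⟩ := hz
    obtain ⟨G, G', h1, h2, h3⟩ := SI.basisE _ (hsq f0 p0) hz
    refine ⟨G, G', h2, fun f p => ?_⟩
    have := SI.case0 (h.conj h2) (by
      intro f p; rw [SI.conj_apply, SI.cj h2, hsq]; simp) f0 p0 (by rw [SI.conj_apply, h3]) f p
    rwa [SI.conj_apply] at this
  push Not at hsq
  obtain ⟨f0, p0, hne⟩ := hsq
  have hne0 : m f0 p0 ≠ 0 := fun hc => hne (by rw [hc]; simp)
  by_cases hA : ∀ f, (m f0 p0 * m f0 p0 * (m f p0 * m f p0)).trace = 0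
  · by_cases hB : ∀ p, (m f0 p0 * m f0 p0 * (m f0 p * m f0 p)).trace = 0
    · left
      obtain ⟨w, hw⟩ : ∃ w, (m f0 p0 * m f0 p0) *ᵥ w ≠ 0 := by
        by_contra! hc
        apply hne
        apply Matrix.mulVec_injective
        ext1 v
        simpa using hc v
      obtain ⟨G, G', h1, h2, h3, -⟩ := SI.basisJ _ (h.nil f0 p0) w hw
      refine ⟨G, G', h2, fun f p => ?_⟩
      have := SI.caseA (h.conj h2) f0 p0 (by rw [SI.conj_apply, h3])
        (by simpa only [SI.conj_apply, SI.cj h2, SI.cjt h2] using hA)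
        (by simpa only [SI.conj_apply, SI.cj h2, SI.cjt h2] using hB) f p
      rwa [SI.conj_apply] at this
    · right; right
      push Not at hB
      obtain ⟨p1, hp1⟩ := hB
      refine ⟨f0, p0, hne0, fun f => ?_⟩
      obtain ⟨g, hg⟩ := SI.B h.tp p0 p1 f0 (by
        simp only [SI.tp_apply, ← transpose_mul, trace_transpose]
        rwa [Matrix.trace_mul_comm]) f
      refine ⟨g, fun p => ?_⟩
      have := hg p
      rw [SI.tp_apply, SI.tp_apply, ← transpose_smul] at this
      exact transpose_injective this
  · right; left
    push Not at hA
    obtain ⟨f1, hf1⟩ := hA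
    exact ⟨f0, p0, hne0, SI.B h f0 f1 p0 hf1⟩
end


section
variable {E : Type*} [AddCommGroup E] [Module ℂ E]

noncomputable def SI.m (a b : Fin 3 → Module.End ℂ E) :
    Module.Dual ℂ E →ₗ[ℂ] E →ₗ[ℂ] Matrix (Fin 3) (Fin 3) ℂ :=
  LinearMap.mk₂ ℂ (fun f p => Matrix.of fun i j => f (b i (a j p)))
    (by intros; ext; simp) (by intros; ext; simp) (by intros; ext; simp) (by intros; ext; simp)

theorem SI.m_apply (a b : Fin 3 → Module.End ℂ E) (f p i j) :
    SI.m a b f p i j = f (b i (a j p)) := rfl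

theorem SI.sep {u : E} (h : ∀ f : Module.Dual ℂ E, f u = 0) : u = 0 :=
  (Module.forall_dual_apply_eq_zero_iff ℂ u).1 h

theorem SI.hyp (a b : Fin 3 → Module.End ℂ E)
    (H : ∀ (x : Module.End ℂ E) (ζ : Fin 3 → E) (l : ℂ), l ≠ 0 →
      (∀ i, x (∑ j, b i (a j (ζ j))) = l • ζ i) → ∀ i, ∑ j, b i (a j (ζ j)) = 0) :
    SI.Hyp (SI.m a b) := by
  apply SI.Hyp.of_nil
  intro f f' p p'
  apply SI.nil_of_noeig
  intro l hl v hv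
  rw [fromBlocks_mulVec] at hv
  have v1 : ∀ i, f (∑ j, b i (a j (v (Sum.inl j) • p + v (Sum.inr j) • p'))) = l * v (Sum.inl i) := by
    intro i
    have := congrFun hv (Sum.inl i)
    simp [Matrix.mulVec, dotProduct, SI.m_apply] at this
    rw [← this, ← Finset.sum_add_distrib, map_sum]
    refine Finset.sum_congr rfl fun j _ => ?_
    simp [mul_comm]
  have v2 : ∀ i, f' (∑ j, b i (a j (v (Sum.inl j) • p + v (Sum.inr j) • p'))) = l * v (Sum.inr i) := by
    intro i
    have := congrFun hv (Sum.inr i)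
    simp [Matrix.mulVec, dotProduct, SI.m_apply] at this
    rw [← this, ← Finset.sum_add_distrib, map_sum]
    refine Finset.sum_congr rfl fun j _ => ?_
    simp [mul_comm]
  have h0 := H (f.smulRight p + f'.smulRight p')
    (fun j => v (Sum.inl j) • p + v (Sum.inr j) • p') l hl (by
      intro i
      rw [LinearMap.add_apply, LinearMap.smulRight_apply, LinearMap.smulRight_apply, v1, v2,
        smul_add, smul_smul, smul_smul])
  ext i
  rcases i with i | i
  · have := v1 i
    rw [h0, map_zero] at this
    simpa [hl] using this.symm
  · have := v2 i
    rw [h0, map_zero] at this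
    simpa [hl] using this.symm

theorem SI.tens {ι : Type*} [Fintype ι] (φ : ι → Module.Dual ℂ E) (u : ι → E)
    (h : ∀ (f' : Module.Dual ℂ E) p, ∑ i, φ i p * f' (u i) = 0) : ∑ i, φ i (u i) = 0 := by
  classical
  let B := Module.Basis.ofVectorSpace ℂ E
  let s := Finset.univ.biUnion fun i => (B.repr (u i)).support
  have e : ∀ i, φ i (u i) = ∑ k ∈ s, φ i (B k) * B.coord k (u i) := by
    intro i
    conv_lhs => rw [← B.linearCombination_repr (u i), Finsupp.linearCombination_apply,
      Finsupp.sum_of_support_subset (s := s) _ (Finset.subset_biUnion_of_mem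
        (fun i => (B.repr (u i)).support) (Finset.mem_univ i)) _ (by simp)]
    rw [map_sum]
    refine Finset.sum_congr rfl fun k _ => ?_
    simp [mul_comm]
  simp_rw [e]
  rw [Finset.sum_comm]
  exact Finset.sum_eq_zero fun k _ => h _ _

theorem SI.claim1 (a b : Fin 3 → Module.End ℂ E) (h : SI.Hyp (SI.m a b)) (x : Module.End ℂ E) :
    ∑ i, b i * (∑ j, a j * x * b j) * a i = 0 := by
  ext e
  apply SI.sep
  intro f
  have := SI.tens (ι := Fin 3 × Fin 3) (fun k => f ∘ₗ b k.1 ∘ₗ a k.2 ∘ₗ x)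
    (fun k => b k.2 (a k.1 e)) (by
    intro f' p
    have := h.t2 f (x p) f' e
    rw [Fintype.sum_prod_type]
    simpa [Matrix.trace, Matrix.mul_apply, SI.m_apply] using this)
  rw [Fintype.sum_prod_type] at this
  simpa using this

theorem SI.powz {n : ℕ} (T : Module.End ℂ E) (N : Matrix (Fin n) (Fin n) ℂ) (z : Fin n → E)
    (h : ∀ l, T (z l) = ∑ i, N i l • z i) (k : ℕ) : ∀ l, (T ^ k) (z l) = ∑ i, (N ^ k) i l • z i := by
  induction k with
  | zero => intro l; simp [Matrix.one_apply]
  | succ k ih =>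
    intro l
    rw [pow_succ, Module.End.mul_apply, h, map_sum]
    simp_rw [map_smul, ih, pow_succ, Matrix.mul_apply, Finset.smul_sum, Finset.sum_smul]
    rw [Finset.sum_comm]
    refine Finset.sum_congr rfl fun i _ => Finset.sum_congr rfl fun j _ => ?_
    rw [smul_smul, mul_comm]

theorem SI.fin (a b : Fin 3 → Module.End ℂ E) (x : Module.End ℂ E)
    (h : ∀ l p, ((∑ i, a i * x * b i) ^ 4) (a l p) = 0) : (∑ i, a i * x * b i) ^ 5 = 0 := by
  rw [pow_succ]
  ext e
  rw [Module.End.mul_apply, LinearMap.sum_apply, map_sum]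
  exact Finset.sum_eq_zero fun i _ => h _ _

theorem SI.tri {R : Type*} [Ring R] (a b : Fin 3 → R) (x : R) (h : ∀ i j, j ≤ i → b i * a j = 0) :
    (∑ i, a i * x * b i) ^ 4 = 0 := by
  set T := ∑ i, a i * x * b i with hT
  have ht : ∀ j, T * a j = ∑ i, a i * x * (b i * a j) := by
    intro j; rw [hT, Finset.sum_mul]; simp only [mul_assoc]
  have t0 : T * a 0 = 0 := by
    rw [ht, Fin.sum_univ_three, h 0 0 (by decide), h 1 0 (by decide), h 2 0 (by decide)]; simp
  have t1 : T * a 1 = a 0 * x * (b 0 * a 1) := by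
    rw [ht, Fin.sum_univ_three, h 1 1 (by decide), h 2 1 (by decide)]; simp
  have t2 : T * a 2 = a 0 * x * (b 0 * a 2) + a 1 * x * (b 1 * a 2) := by
    rw [ht, Fin.sum_univ_three, h 2 2 (by decide)]; simp
  have s1 : T ^ 2 * a 1 = 0 := by
    rw [pow_two, mul_assoc, t1]; simp only [← mul_assoc, t0, zero_mul]
  have s2 : T ^ 3 * a 2 = 0 := by
    have s0 : T ^ 2 * a 0 = 0 := by rw [pow_two, mul_assoc, t0, mul_zero]
    rw [pow_succ, mul_assoc, t2, mul_add]
    simp only [← mul_assoc, s0, s1, zero_mul, add_zero]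
  have s1' : T ^ 3 * a 1 = 0 := by rw [pow_succ', mul_assoc, s1, mul_zero]
  have s0' : T ^ 3 * a 0 = 0 := by rw [pow_succ, mul_assoc, t0, mul_zero]
  have hT3 : T = a 0 * x * b 0 + a 1 * x * b 1 + a 2 * x * b 2 := by rw [hT, Fin.sum_univ_three]
  have : T ^ 4 = T ^ 3 * (a 0 * x * b 0 + a 1 * x * b 1 + a 2 * x * b 2) := by
    rw [← hT3, ← pow_succ]
  rw [this]
  simp only [mul_add, ← mul_assoc, s2, s1', s0', zero_mul, add_zero]

theorem SI.claim2 (a b : Fin 3 → Module.End ℂ E) (h : SI.Hyp (SI.m a b)) (x : Module.End ℂ E) :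
    (∑ i, a i * x * b i) ^ 5 = 0 := by
  rcases SI.main h with ⟨G, G', hG, hU⟩ | ⟨f0, p0, hne, hg⟩ | ⟨f0, p0, hne, hg⟩
  · have e : ∑ i, a i * x * b i = ∑ i, (∑ k, G' k i • a k) * x * (∑ l, G i l • b l) := by
      have : ∑ i, (∑ k, G' k i • a k) * x * (∑ l, G i l • b l)
          = ∑ k, ∑ l, (G' * G) k l • (a k * x * b l) := by
        simp only [Fin.sum_univ_three, Matrix.mul_apply, add_mul, mul_add, smul_mul_assoc,
          mul_smul_comm, add_smul, smul_add, smul_smul]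
        simp only [mul_comm (G _ _)]
        abel
      rw [this, hG]
      simp [Matrix.one_apply]
    rw [e, pow_succ, SI.tri, zero_mul]
    intro i j hij
    ext p
    apply SI.sep
    intro f
    have := hU f p i j hij
    rw [Module.End.mul_apply]
    simp only [Matrix.mul_apply, SI.m_apply, Fin.sum_univ_three] at this
    simp [Fin.sum_univ_three]
    linear_combination this
  · obtain ⟨i0, j0, hij⟩ : ∃ i j, SI.m a b f0 p0 i j ≠ 0 := by
      by_contra! hc
      exact hne (by ext i j; exact hc i j)
    rw [SI.m_apply] at hij
    obtain ⟨φ, hφ⟩ : ∃ φ : Module.Dual ℂ E, ∀ i j p, b i (a j p) = φ p • b i (a j p0) := by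
      refine ⟨(f0 (b i0 (a j0 p0)))⁻¹ • (f0 ∘ₗ b i0 ∘ₗ a j0), fun i j p => ?_⟩
      obtain ⟨g, hg⟩ := hg p
      have h1 : ∀ i j, b i (a j p) = g • b i (a j p0) := by
        intro i j
        rw [← sub_eq_zero]
        apply SI.sep
        intro f
        have := congrFun (congrFun (hg f) i) j
        simp [SI.m_apply] at this
        simp [this]
      rw [h1]
      congr 1
      simp [h1]
      field_simp
    apply SI.fin
    set T := ∑ i, a i * x * b i with hT
    have hz := SI.powz T (SI.m a b (φ ∘ₗ x) p0) (fun l => ∑ i, a i (x (b i (a l p0)))) (by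
      intro l
      rw [map_sum]
      simp only [hT, LinearMap.sum_apply, Module.End.mul_apply]
      simp only [hφ _ _ (x _), SI.m_apply, map_smul, Finset.smul_sum]
      rfl) 3
    intro l p
    rw [pow_succ, Module.End.mul_apply]
    have : T (a l p) = φ p • ∑ i, a i (x (b i (a l p0))) := by
      simp only [hT, LinearMap.sum_apply, Module.End.mul_apply]
      simp only [hφ _ _ p, map_smul, Finset.smul_sum]
    rw [this, map_smul, hz, h.nil]
    simp
  · obtain ⟨i0, j0, hij⟩ : ∃ i j, SI.m a b f0 p0 i j ≠ 0 := by
      by_contra! hc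
      exact hne (by ext i j; exact hc i j)
    rw [SI.m_apply] at hij
    obtain ⟨u, hu⟩ : ∃ u : E, ∀ i j p, b i (a j p) = f0 (b i (a j p)) • u := by
      refine ⟨(f0 (b i0 (a j0 p0)))⁻¹ • b i0 (a j0 p0), fun i j p => ?_⟩
      rw [← sub_eq_zero]
      apply SI.sep
      intro f
      obtain ⟨g, hg⟩ := hg f
      have h1 : ∀ i j p, f (b i (a j p)) = g * f0 (b i (a j p)) := by
        intro i j p
        exact congrFun (congrFun (hg p) i) j
      simp [h1]
      field_simp
      ring
    apply SI.fin
    set T := ∑ i, a i * x * b i with hT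
    have ht : ∀ l p, T (a l p) = ∑ i, f0 (b i (a l p)) • a i (x u) := by
      intro l p
      simp only [hT, LinearMap.sum_apply, Module.End.mul_apply]
      refine Finset.sum_congr rfl fun i _ => ?_
      conv_lhs => rw [hu i l p, map_smul, map_smul]
    have hz := SI.powz T (SI.m a b f0 (x u)) (fun l => a l (x u)) (fun l => ht l _) 3
    intro l p
    rw [pow_succ, Module.End.mul_apply, ht, map_sum]
    simp [hz, h.nil]
end

theorem SI.app {A : Type*} [NormedRing A] [NormedAlgebra ℂ A] [CompleteSpace A]
    (a b : Fin 3 → A) (hS : ∀ x : A, spectralRadius ℂ (∑ i, a i * x * b i) = 0)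
    (I : Ideal A) [I.IsMaximal] :
    (∀ x : A, ∑ i, b i * (∑ j, a j * x * b j) * a i ∈ I) ∧
    (∀ x : A, (∑ i, a i * x * b i) ^ 5 ∈ I) := by
  classical
  let L := Algebra.lsmul ℂ ℂ (A ⧸ I) (A := A)
  have hL : ∀ z : A, L z = 0 → z ∈ I := by
    intro z hz
    have h1 : z • (Submodule.Quotient.mk 1 : A ⧸ I) = 0 := LinearMap.congr_fun hz _
    rw [← Submodule.Quotient.mk_smul, Submodule.Quotient.mk_eq_zero] at h1
    simpa using h1
  have h : SI.Hyp (SI.m (fun i => L (a i)) (fun i => L (b i))) := by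
    apply SI.hyp
    intro φ ζ l hl hx i
    obtain ⟨x, hxφ⟩ := SI.density I φ (Finset.univ.image fun i => ∑ j, L (b i) (L (a j) (ζ j)))
    have hx2 : ∀ i, x • (∑ j, b i • a j • ζ j) = l • ζ i := by
      intro i
      rw [← hx i]
      exact hxφ _ (Finset.mem_image_of_mem _ (Finset.mem_univ i))
    have h0 : ∑ j, a j • ζ j = 0 := by
      apply SI.eig I _ (hS x) l hl
      rw [Finset.sum_smul, Finset.smul_sum]
      refine Finset.sum_congr rfl fun i _ => ?_
      rw [mul_smul, mul_smul, Finset.smul_sum, hx2, smul_comm]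
    have : ∑ j, b i • a j • ζ j = 0 := by rw [← Finset.smul_sum, h0, smul_zero]
    exact this
  refine ⟨fun x => hL _ ?_, fun x => hL _ ?_⟩
  · have := SI.claim1 _ _ h (L x)
    simpa only [map_sum, map_mul] using this
  · have := SI.claim2 _ _ h (L x)
    simpa only [map_sum, map_mul, map_pow] using this

end

/-- **Proposition 4.1.** Let `A` be a unital complex Banach algebra and let
`S = Σ_{i=1}^3 M_{a_i,b_i}` be an elementary operator on `A` of length `3` such
that `r(Sx) = 0` for every `x ∈ A`.  Then `S*(S(x)) ∈ rad A` for every `x ∈ A`,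
and `(Sx)⁵ ∈ rad A` for every `x ∈ A`, where `S* = Σ_{i=1}^3 M_{b_i,a_i}`. -/
theorem spectrally_infinitesimal_length_three_elementary_operator
    {A : Type*} [NormedRing A] [NormedAlgebra ℂ A] [CompleteSpace A]
    (a b : Fin 3 → A)
    (hSlen : ∀ (m : ℕ) (c d : Fin m → A),
      (∀ x : A, ∑ i, a i * x * b i = ∑ i, c i * x * d i) → 3 ≤ m)
    (hS : ∀ x : A, spectralRadius ℂ (∑ i, a i * x * b i) = 0) :
    (∀ x : A, ∑ i, b i * (∑ j, a j * x * b j) * a i ∈ jacobsonRadical A) ∧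
    (∀ x : A, (∑ i, a i * x * b i) ^ 5 ∈ jacobsonRadical A) := by
  have hmem : ∀ z : A, (∀ I : Ideal A, I.IsMaximal → z ∈ I) → z ∈ jacobsonRadical A := by
    intro z hz
    rw [jacobsonRadical, Ideal.jacobson, Submodule.mem_sInf]
    exact fun I hI => hz I hI.2
  exact ⟨fun x => hmem _ fun I hI => (SI.app a b hS I).1 x,
    fun x => hmem _ fun I hI => (SI.app a b hS I).2 x⟩
end

section
/- Let E be a complex Banach space and let A be a closed subalgebra of B(E) acting irreducibly on E (i.e. {aζ : a ∈ A} = E for every nonzero ζ ∈ E). Let S : A → B(E) be the elementary operator Sx = Σ_{i=1}^3 u_i x v_i with u_i, v_i ∈ B(E), of length 3, and suppose that one of the following holds: (i) there exist λ ∈ ℂ, ζ₀, ζ₁ ∈ E and f ∈ E* such that v_1u_1 = v_2u_2 = v_3u_3 = λI, v_1u_2 = ζ₁⊗f, v_1u_3 = 0, v_2u_1 = ζ₀⊗f, v_2u_3 = ζ₁⊗f, v_3u_1 = 0 and v_3u_2 = −ζ₀⊗f; or (ii) there exist λ ∈ ℂ, ζ₀ ∈ E and f, g ∈ E* such that v_1u_1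 = v_2u_2 = v_3u_3 = λI, v_1u_2 = ζ₀⊗g, v_1u_3 = 0, v_2u_1 = ζ₀⊗f, v_2u_3 = ζ₀⊗g, v_3u_1 = 0 and v_3u_2 = −ζ₀⊗f. Then S is spectrally bounded, i.e. there is a constant M ≥ 0 with r(Sx) ≤ M·r(x) for all x ∈ A, where r denotes the spectral radius in B(E). -/
open scoped ENNReal NNReal


namespace SpecAux

open Matrix

/-- Nilpotency, first pattern. -/
lemma nil1 {R : Type*} [Ring R] [Algebra ℂ R] (p q : R) (a b : ℂ)
    (h1 : p * p = a • p) (h2 : q * p = a • q) (h3 : p * q = b • p) (h4 : q * q = b • q) :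
    IsNilpotent (!![0, p, 0; q, 0, p; 0, -q, 0] : Matrix (Fin 3) (Fin 3) R) := by
  have h : (!![0, p, 0; q, 0, p; 0, -q, 0] : Matrix (Fin 3) (Fin 3) R) ^ 2
      = !![b • p, 0, a • p; 0, a • q - b • p, 0; -(b • q), 0, -(a • q)] := by
    rw [pow_two]
    ext i j
    fin_cases i <;> fin_cases j <;>
      simp [Matrix.mul_apply, Fin.sum_univ_three, h1, h2, h3, h4] <;> abel
  refine ⟨4, ?_⟩
  rw [show 4 = 2 + 2 from rfl, pow_add, h]
  ext i j
  fin_cases i <;> fin_cases j <;>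
      simp [Matrix.mul_apply, Fin.sum_univ_three, h1, h2, h3, h4, mul_sub, sub_mul] <;> module

/-- Nilpotency, second pattern. -/
lemma nil2 {R : Type*} [Ring R] [Algebra ℂ R] (p q : R) (a b : ℂ)
    (h1 : p * p = a • p) (h2 : q * p = b • p) (h3 : p * q = a • q) (h4 : q * q = b • q) :
    IsNilpotent (!![0, p, 0; q, 0, p; 0, -q, 0] : Matrix (Fin 3) (Fin 3) R) := by
  have h : (!![0, p, 0; q, 0, p; 0, -q, 0] : Matrix (Fin 3) (Fin 3) R) ^ 2
      = !![a • q, 0, a • p; 0, b • p - a • q, 0; -(b • q), 0, -(b • p)] := by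
    rw [pow_two]
    ext i j
    fin_cases i <;> fin_cases j <;>
      simp [Matrix.mul_apply, Fin.sum_univ_three, h1, h2, h3, h4] <;> abel
  refine ⟨4, ?_⟩
  rw [show 4 = 2 + 2 from rfl, pow_add, h]
  ext i j
  fin_cases i <;> fin_cases j <;>
      simp [Matrix.mul_apply, Fin.sum_univ_three, h1, h2, h3, h4, mul_sub, sub_mul] <;> module

lemma key {R : Type*} [Ring R] [Algebra ℂ R] (u v : Fin 3 → R) (x d : R) (lam mu : ℂ)
    (p q : R)
    (hmu : mu ≠ 0)
    (hd1 : d * (algebraMap ℂ R mu - lam • x) = 1)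
    (hd2 : (algebraMap ℂ R mu - lam • x) * d = 1)
    (hCR : (Matrix.of fun i j => v i * u j) = lam • (1 : Matrix (Fin 3) (Fin 3) R)
      + !![0, p, 0; q, 0, p; 0, -q, 0])
    (hN : IsNilpotent (!![0, d * x * p, 0; d * x * q, 0, d * x * p; 0, -(d * x * q), 0] :
      Matrix (Fin 3) (Fin 3) R)) :
    mu ∉ spectrum ℂ (∑ i, u i * x * v i) := by
  intro hmem
  let U : Matrix (Fin 3) (Fin 3) R := Matrix.of fun i j => if i = 0 then u j else 0
  let V : Matrix (Fin 3) (Fin 3) R := Matrix.of fun i j => if j = 0 then v i else 0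
  let X : Matrix (Fin 3) (Fin 3) R := Matrix.diagonal fun _ => x
  let K : Matrix (Fin 3) (Fin 3) R := !![0, p, 0; q, 0, p; 0, -q, 0]
  have hVU : V * U = lam • (1 : Matrix (Fin 3) (Fin 3) R) + K := by
    rw [← hCR]
    ext i j
    simp [U, V, Matrix.mul_apply]
  -- the spectrum of the other product
  have h2 : mu ∉ spectrum ℂ ((X * V) * U) := by
    rw [spectrum.notMem_iff, mul_assoc, hVU]
    let D : Matrix (Fin 3) (Fin 3) R := Matrix.diagonal fun _ => d
    let Z : Matrix (Fin 3) (Fin 3) R := Matrix.diagonal fun _ => algebraMap ℂ R mu - lam • x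
    have hDZ : D * Z = 1 := by
      simp only [D, Z, Matrix.diagonal_mul_diagonal, hd1, Matrix.diagonal_one]
    have hZD : Z * D = 1 := by
      simp only [D, Z, Matrix.diagonal_mul_diagonal, hd2, Matrix.diagonal_one]
    have hZ : IsUnit Z := ⟨⟨Z, D, hZD, hDZ⟩, rfl⟩
    have hZe : algebraMap ℂ (Matrix (Fin 3) (Fin 3) R) mu - lam • X = Z := by
      ext i j
      by_cases hij : i = j
      · subst hij; simp [Z, X, Matrix.algebraMap_matrix_apply]
      · simp [Z, X, Matrix.algebraMap_matrix_apply, hij]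
    have hK : D * X * K = !![0, d * x * p, 0; d * x * q, 0, d * x * p; 0, -(d * x * q), 0] := by
      simp only [D, X, K, Matrix.diagonal_mul_diagonal]
      ext i j
      rw [Matrix.diagonal_mul]
      fin_cases i <;> fin_cases j <;> simp
    have : algebraMap ℂ (Matrix (Fin 3) (Fin 3) R) mu - X * (lam • 1 + K)
        = Z * (1 - D * X * K) := by
      rw [mul_sub, ← mul_assoc, ← mul_assoc, hZD, one_mul, mul_one, ← hZe, mul_add,
        mul_smul_comm, mul_one]
      abel
    rw [this, hK]
    exact hZ.mul hN.isUnit_one_sub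
  have h3 : mu ∉ spectrum ℂ (U * (X * V)) := by
    intro h
    have : mu ∈ spectrum ℂ (U * (X * V)) \ {0} := ⟨h, hmu⟩
    rw [spectrum.nonzero_mul_comm] at this
    exact h2 this.1
  apply h3
  intro hu
  apply hmem
  change IsUnit _ at hu
  change IsUnit _
  have hS : U * (X * V) = Matrix.diagonal (fun i => if i = 0 then ∑ i, u i * x * v i else 0) := by
    ext i j
    rw [Matrix.mul_apply]
    simp only [X, Matrix.diagonal_mul, Matrix.diagonal_apply]
    fin_cases i <;> fin_cases j <;> simp [U, V, mul_assoc]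
  have hS' : algebraMap ℂ (Matrix (Fin 3) (Fin 3) R) mu - U * (X * V) = Matrix.diagonal
      (fun i => algebraMap ℂ R mu - if i = 0 then ∑ i, u i * x * v i else 0) := by
    rw [hS]
    ext i j
    by_cases hij : i = j
    · subst hij; simp [Matrix.algebraMap_matrix_apply]
    · simp [Matrix.algebraMap_matrix_apply, hij]
  rw [hS'] at hu
  obtain ⟨⟨P, Q, hPQ, hQP⟩, rfl : P = _⟩ := hu
  refine ⟨⟨_, Q 0 0, ?_, ?_⟩, rfl⟩
  · have := congrFun (congrFun hPQ 0) 0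
    rw [Matrix.diagonal_mul] at this
    simpa using this
  · have := congrFun (congrFun hQP 0) 0
    rw [Matrix.mul_diagonal] at this
    simpa using this

lemma key2 {E : Type*} [NormedAddCommGroup E] [NormedSpace ℂ E] [CompleteSpace E]
    (u v : Fin 3 → (E →L[ℂ] E)) (lam : ℂ) (p q : E →L[ℂ] E)
    (hCR : (Matrix.of fun i j => v i * u j) = lam • (1 : Matrix (Fin 3) (Fin 3) (E →L[ℂ] E))
      + !![0, p, 0; q, 0, p; 0, -q, 0])
    (hN : ∀ y : E →L[ℂ] E, IsNilpotent (!![0, y * p, 0; y * q, 0, y * p; 0, -(y * q), 0] :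
      Matrix (Fin 3) (Fin 3) (E →L[ℂ] E))) (x : E →L[ℂ] E) :
    spectralRadius ℂ (∑ i, u i * x * v i) ≤ ((‖lam‖₊ : ℝ≥0) : ℝ≥0∞) * spectralRadius ℂ x := by
  refine iSup₂_le fun mu hmem => ?_
  by_cases hmu : mu = 0
  · simp [hmu]
  have hnu : ¬ IsUnit (algebraMap ℂ (E →L[ℂ] E) mu - lam • x) := by
    rintro ⟨⟨z, d, h1, h2⟩, rfl : z = _⟩
    exact key u v x d lam mu p q hmu h2 h1 hCR (hN _) hmem
  have hlam : lam ≠ 0 := by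
    rintro rfl
    apply hnu
    rw [zero_smul, sub_zero]
    exact (isUnit_iff_ne_zero.mpr hmu).map _
  have hm : mu ∈ spectrum ℂ (lam • x) := hnu
  have hm2 : mu / lam ∈ spectrum ℂ x := by
    intro hu
    apply hnu
    have h : algebraMap ℂ (E →L[ℂ] E) mu - lam • x
        = algebraMap ℂ (E →L[ℂ] E) lam * (algebraMap ℂ (E →L[ℂ] E) (mu / lam) - x) := by
      rw [mul_sub, ← map_mul, mul_div_cancel₀ _ hlam, Algebra.smul_def]
    rw [h]
    exact ((isUnit_iff_ne_zero.mpr hlam).map _).mul hu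
  calc (‖mu‖₊ : ℝ≥0∞) = (‖lam‖₊ : ℝ≥0∞) * (‖mu / lam‖₊ : ℝ≥0∞) := by
        rw [← ENNReal.coe_mul, ← nnnorm_mul, mul_div_cancel₀ _ hlam]
    _ ≤ _ := by
        gcongr
        exact le_iSup₂ (f := fun k (_ : k ∈ spectrum ℂ x) => (‖k‖₊ : ℝ≥0∞)) (mu / lam) hm2

end SpecAux

/-- **Lemma 4.2.** Let `E` be a complex Banach space and let `A` be a closed
irreducible subalgebra of `B(E)`.  Let `Sx = Σ_{i=1}^3 u_i x v_i`, with
`u_i, v_i ∈ B(E)`, be an elementary operator of length `3` on `A` whose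
coefficient products `(v_i u_j)` have one of the two special forms (i), (ii)
below.  Then `S` is spectrally bounded, the spectral radius being computed in
`B(E)`. -/
theorem special_length_three_elementary_operator_spectrally_bounded
    {E : Type*} [NormedAddCommGroup E] [NormedSpace ℂ E] [CompleteSpace E]
    (A : Subalgebra ℂ (E →L[ℂ] E)) (hA : IsClosed (A : Set (E →L[ℂ] E)))
    (hirr : ∀ ζ : E, ζ ≠ 0 → ∀ η : E, ∃ a ∈ A, a ζ = η)
    (u v : Fin 3 → (E →L[ℂ] E))
    (hlen : ∀ (m : ℕ) (u' v' : Fin m → (E →L[ℂ] E)),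
      (∀ x ∈ A, ∑ i, u i * x * v i = ∑ i, u' i * x * v' i) → 3 ≤ m)
    (hcase :
      (∃ (lam : ℂ) (ζ₀ ζ₁ : E) (f : E →L[ℂ] ℂ),
        v 0 * u 0 = lam • (1 : E →L[ℂ] E) ∧
        v 1 * u 1 = lam • (1 : E →L[ℂ] E) ∧
        v 2 * u 2 = lam • (1 : E →L[ℂ] E) ∧
        v 0 * u 1 = f.smulRight ζ₁ ∧
        v 0 * u 2 = 0 ∧
        v 1 * u 0 = f.smulRight ζ₀ ∧
        v 1 * u 2 = f.smulRight ζ₁ ∧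
        v 2 * u 0 = 0 ∧
        v 2 * u 1 = -(f.smulRight ζ₀)) ∨
      (∃ (lam : ℂ) (ζ₀ : E) (f g : E →L[ℂ] ℂ),
        v 0 * u 0 = lam • (1 : E →L[ℂ] E) ∧
        v 1 * u 1 = lam • (1 : E →L[ℂ] E) ∧
        v 2 * u 2 = lam • (1 : E →L[ℂ] E) ∧
        v 0 * u 1 = g.smulRight ζ₀ ∧
        v 0 * u 2 = 0 ∧
        v 1 * u 0 = f.smulRight ζ₀ ∧
        v 1 * u 2 = g.smulRight ζ₀ ∧
        v 2 * u 0 = 0 ∧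
        v 2 * u 1 = -(f.smulRight ζ₀))) :
    ∃ M : ℝ≥0, ∀ x ∈ A,
      spectralRadius ℂ (∑ i, u i * x * v i) ≤ (M : ℝ≥0∞) * spectralRadius ℂ x := by
  rcases hcase with ⟨lam, z0, z1, f, h00, h11, h22, h01, h02, h10, h12, h20, h21⟩ |
    ⟨lam, z0, f, g, h00, h11, h22, h01, h02, h10, h12, h20, h21⟩
  · refine ⟨‖lam‖₊, fun x _ => SpecAux.key2 u v lam (f.smulRight z1) (f.smulRight z0) ?_ ?_ x⟩
    · ext1 i j
      fin_cases i <;> fin_cases j <;> simp [*]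
    · intro y
      apply SpecAux.nil1 _ _ (f (y z1)) (f (y z0)) <;> ext e <;> simp [mul_comm, smul_smul]
  · refine ⟨‖lam‖₊, fun x _ => SpecAux.key2 u v lam (g.smulRight z0) (f.smulRight z0) ?_ ?_ x⟩
    · ext1 i j
      fin_cases i <;> fin_cases j <;> simp [*]
    · intro y
      apply SpecAux.nil2 _ _ (g (y z0)) (f (y z0)) <;> ext e <;> simp [mul_comm, smul_smul]
end
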